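/- Let N ≥ 1, let a_1,…,a_N ≥ 0, let b_1,…,b_N > 0 be pairwise distinct, set a = Σ_{j=1}^N a_j, and let u : [0,∞) → ℝ be differentiable with u'(t) = −a·u(t) + ∫_0^t K(t−s)·u(s) ds for all t ≥ 0 and u(0) = u_0. Then there exists a differentiable function p : [0,∞) → ℝ^{N+1} with p'(t) = A* p(t) for all t ≥ 0, p(0) = (u_0, 0, …, 0), and p_0(t) = u(t) for all t ≥ 0; i.e., the solution of the memory equation is the first component of a Markov process in a higher dimensional space. -/

import Mathlib

open MeasureTheory Finset

/-!
The function `K j` is the density of a sum of independent exponential waiting times with rates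
`b 1, …, b j`. Its coefficients are the barycentric weights of the nodes `-b i`, so `K j` is the
product `b 1 ⋯ b j` times the divided difference of `x ↦ exp (x * t)` at these nodes. Convolving
`u` with such divided differences, one for each interval of nodes `j, …, m`, gives the occupations
of the states of the loop: removing a node from a divided difference turns into the differential
equation linking state `j` to state `j + 1`, and the outflow of state `1` is the memory integral.
-/

section NodalWeight

variable {ι F : Type*} [DecidableEq ι] [Field F] {s : Finset ι} {v : ι → F}

lemma sum_nodalWeight (hv : Set.InjOn v s) :
    ∑ i ∈ s, Lagrange.nodalWeight s v i = if #s = 1 then 1 else 0 := by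
  rcases s.eq_empty_or_nonempty with rfl | hs
  · simp
  -- The sum is the leading coefficient of the interpolation of the constant polynomial `1`.
  have hcoeff := Lagrange.coeff_eq_sum (P := (1 : Polynomial F)) hv
    (by simpa only [Polynomial.degree_one, Nat.cast_pos] using hs.card_pos)
  have hcard : #s - 1 = 0 ↔ #s = 1 := by have := hs.card_pos; omega
  simpa only [Lagrange.nodalWeight, Polynomial.coeff_one, Polynomial.eval_one, hcard, one_div,
    prod_inv_distrib] using hcoeff.symm

lemma sub_mul_nodalWeight_insert {i j : ι} (hv : v i ≠ v j) (hj : j ∉ s) :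
    (v i - v j) * Lagrange.nodalWeight (insert j s) v i = Lagrange.nodalWeight s v i := by
  have hij : j ≠ i := fun h => hv (congrArg v h.symm)
  rw [Lagrange.nodalWeight, Lagrange.nodalWeight, erase_insert_of_ne hij,
    prod_insert fun h => hj (mem_of_mem_erase h), mul_inv_cancel_left₀ (sub_ne_zero.2 hv)]

lemma mul_prod_erase_div_sub {b : ι → F} {i : ι} (hi : i ∈ s) :
    b i * ∏ k ∈ s.erase i, b k / (b k - b i) =
      (∏ k ∈ s, b k) * Lagrange.nodalWeight s (fun k => -b k) i := by
  simp only [Lagrange.nodalWeight, neg_sub_neg, div_eq_mul_inv, prod_mul_distrib]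
  rw [← mul_assoc, mul_prod_erase s b hi]

end NodalWeight

section Convolution

variable {E : Type*} [NormedAddCommGroup E] [NormedSpace ℝ E]

/-- The convolution of `t ↦ exp (c * t)` with `u` on `[0, t]`. -/
noncomputable def expConv (c : ℝ) (u : ℝ → E) (t : ℝ) : E :=
  ∫ s in (0 : ℝ)..t, Real.exp (c * (t - s)) • u s

lemma expConv_eq_exp_smul_integral (c : ℝ) (u : ℝ → E) (t : ℝ) :
    expConv c u t = Real.exp (c * t) • ∫ s in (0 : ℝ)..t, Real.exp (-c * s) • u s := by
  rw [expConv, ← intervalIntegral.integral_smul]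
  congr! 2 with s
  rw [smul_smul, ← Real.exp_add]
  ring_nf

lemma hasDerivAt_expConv [CompleteSpace E] (c : ℝ) {u : ℝ → E} (hu : Continuous u) (t : ℝ) :
    HasDerivAt (expConv c u) (c • expConv c u t + u t) t := by
  have hcont : Continuous fun s => Real.exp (-c * s) • u s := by fun_prop
  have hexp : HasDerivAt (fun t => Real.exp (c * t)) (Real.exp (c * t) * c) t := by
    simpa only [id, mul_one] using ((hasDerivAt_id t).const_mul c).exp
  have hinv : Real.exp (c * t) * Real.exp (-c * t) = 1 := by
    rw [← Real.exp_add, neg_mul, add_neg_cancel, Real.exp_zero]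
  rw [funext (expConv_eq_exp_smul_integral c u)]
  refine (hexp.smul (hcont.integral_hasStrictDerivAt 0 t).hasDerivAt).congr_deriv ?_
  rw [smul_smul, hinv, one_smul, add_comm, mul_comm, mul_smul]

/-- The convolution on `[0, t]` of `u` with the divided difference of `x ↦ exp (x * t)` at the
nodes `v i`, `i ∈ s`. The divided difference is written through the barycentric weights, so this
is meaningful for pairwise distinct nodes only. -/
noncomputable def dividedExpConv {ι : Type*} [DecidableEq ι] (s : Finset ι) (v : ι → ℝ)
    (u : ℝ → E) (t : ℝ) : E :=
  ∑ i ∈ s, Lagrange.nodalWeight s v i • expConv (v i) u t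

lemma hasDerivAt_dividedExpConv_insert [CompleteSpace E] {ι : Type*} [DecidableEq ι]
    {s : Finset ι} {v : ι → ℝ} {j : ι} (hv : Set.InjOn v (insert j s : Finset ι)) (hj : j ∉ s)
    {u : ℝ → E} (hu : Continuous u) (t : ℝ) :
    HasDerivAt (dividedExpConv (insert j s) v u)
      (v j • dividedExpConv (insert j s) v u t + dividedExpConv s v u t +
        if s = ∅ then u t else 0) t := by
  set w := Lagrange.nodalWeight (insert j s) v
  have hderiv : HasDerivAt (dividedExpConv (insert j s) v u)
      (∑ i ∈ insert j s, w i • (v i • expConv (v i) u t + u t)) t :=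
    HasDerivAt.fun_sum fun i _ => (hasDerivAt_expConv (v i) hu t).const_smul (w i)
  have hinput : ∑ i ∈ insert j s, w i • u t = if s = ∅ then u t else 0 := by
    simp [← sum_smul, w, sum_nodalWeight hv, card_insert_of_notMem hj]
  have hremove : ∑ i ∈ insert j s, (v i - v j) • w i • expConv (v i) u t =
      dividedExpConv s v u t := by
    rw [sum_insert hj, sub_self, zero_smul, zero_add, dividedExpConv]
    refine sum_congr rfl fun i hi => ?_
    have hij : v i ≠ v j := hv.ne (mem_coe.2 (mem_insert_of_mem hi))
      (mem_coe.2 (mem_insert_self j s)) (ne_of_mem_of_not_mem hi hj)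
    rw [smul_smul, sub_mul_nodalWeight_insert hij hj]
  refine hderiv.congr_deriv ?_
  rw [← hinput, ← hremove, dividedExpConv, smul_sum, ← sum_add_distrib, ← sum_add_distrib]
  exact sum_congr rfl fun i _ => by module

end Convolution

section Loop

/-- The memory kernel `∑ⱼ aⱼ Kⱼ`. -/
noncomputable def memoryKernel (N : ℕ) (a b : ℕ → ℝ) (t : ℝ) : ℝ :=
  ∑ j ∈ Icc 1 N, a j *
    ∑ i ∈ Icc 1 j, b i * (∏ k ∈ (Icc 1 j).erase i, b k / (b k - b i)) * Real.exp (-(b i) * t)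

/-- The loop generator `A*` on the states `0, …, N`: state `0` is left for state `j` at rate `a j`,
and state `j` for state `j - 1` at rate `b j`. It acts on column vectors. -/
def loopGenerator (N : ℕ) (a b : ℕ → ℝ) : Matrix (Fin (N + 1)) (Fin (N + 1)) ℝ :=
  Matrix.of fun i j =>
    if (i : ℕ) = 0 ∧ (j : ℕ) = 0 then -(∑ k ∈ Icc 1 N, a k)
    else if (i : ℕ) = 0 ∧ (j : ℕ) = 1 then b 1
    else if (j : ℕ) = 0 then a (i : ℕ)
    else if (i : ℕ) = (j : ℕ) then -(b (i : ℕ))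
    else if (j : ℕ) = (i : ℕ) + 1 then b (j : ℕ)
    else 0

variable {E : Type*} [NormedAddCommGroup E] [NormedSpace ℝ E] {N : ℕ} {a b : ℕ → ℝ}

lemma sum_loopGenerator_zero_smul {x : ℕ → E} (hx : x (N + 1) = 0) :
    ∑ k, loopGenerator N a b 0 k • x k = -(∑ k ∈ Icc 1 N, a k) • x 0 + b 1 • x 1 := by
  rcases N with _ | N
  · simp_all [loopGenerator]
  · simp [loopGenerator, Fin.sum_univ_succ]

lemma sum_loopGenerator_smul_of_ne_zero {x : ℕ → E} (hx : x (N + 1) = 0) {i : Fin (N + 1)}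
    (hi : i ≠ 0) :
    ∑ k, loopGenerator N a b i k • x k = a i • x 0 - b i • x i + b (i + 1) • x (i + 1) := by
  let row : ℕ → ℝ := fun k =>
    (if k = 0 then a i else 0) - (if k = i then b i else 0) + (if k = i + 1 then b (i + 1) else 0)
  have hrow : ∀ k : Fin (N + 1), loopGenerator N a b i k = row k := by
    intro k
    have hi' : (i : ℕ) ≠ 0 := Fin.val_ne_zero_iff.2 hi
    simp only [loopGenerator, Matrix.of_apply, row]
    grind
  calc ∑ k, loopGenerator N a b i k • x k
      = ∑ k ∈ range (N + 2), row k • x k := by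
        rw [sum_range_succ, hx, smul_zero, add_zero, ← Fin.sum_univ_eq_sum_range]
        simp only [hrow]
    _ = a i • x 0 - b i • x i + b (i + 1) • x (i + 1) := by
        have hiN : (i : ℕ) ≤ N := i.is_le
        have hiN' : (i : ℕ) < N + 2 := by omega
        simp [row, add_smul, sub_smul, sum_add_distrib, hiN', hiN.not_gt]

/-- The occupation at time `t` of state `j` of the chain `m → m - 1 → ⋯ → j → ⋯`, left at the rates
`b m, …, b j`, when mass enters at state `m` at rate `u`. -/
noncomputable def chainOccupation (b : ℕ → ℝ) (u : ℝ → E) (m j : ℕ) (t : ℝ) : E :=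
  (∏ k ∈ Ioc j m, b k) • dividedExpConv (Icc j m) (fun k => -b k) u t

/-- The occupation at time `t` of state `j` of the loop when mass enters each state `m ≤ N` at rate
`a m • u`. -/
noncomputable def loopOccupation (N : ℕ) (a b : ℕ → ℝ) (u : ℝ → E) (j : ℕ) (t : ℝ) : E :=
  ∑ m ∈ Icc j N, a m • chainOccupation b u m j t

lemma chainOccupation_of_lt (u : ℝ → E) {m j : ℕ} (h : m < j) (t : ℝ) :
    chainOccupation b u m j t = 0 := by
  simp [chainOccupation, dividedExpConv, h]

lemma loopOccupation_of_lt (u : ℝ → E) {j : ℕ} (h : N < j) (t : ℝ) :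
    loopOccupation N a b u j t = 0 := by
  simp [loopOccupation, h]

lemma loopOccupation_zero_right (u : ℝ → E) (j : ℕ) : loopOccupation N a b u j 0 = 0 := by
  simp [loopOccupation, chainOccupation, dividedExpConv, expConv]

lemma hasDerivAt_chainOccupation [CompleteSpace E] {u : ℝ → E} (hu : Continuous u) {m j : ℕ}
    (hjm : j ≤ m) (hb : Set.InjOn b (Icc j m)) (t : ℝ) :
    HasDerivAt (chainOccupation b u m j)
      ((if m = j then u t else 0) - b j • chainOccupation b u m j t +
        b (j + 1) • chainOccupation b u m (j + 1) t) t := by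
  have hinsert : insert j (Icc (j + 1) m) = Icc j m := insert_Icc_add_one_left_eq_Icc hjm
  have hderiv := hasDerivAt_dividedExpConv_insert (s := Icc (j + 1) m) (j := j)
    (v := fun k => -b k) (by rw [hinsert]; exact neg_injective.comp_injOn hb) (by simp) hu t
  rw [hinsert] at hderiv
  refine (hderiv.const_smul (∏ k ∈ Ioc j m, b k)).congr_deriv ?_
  rcases hjm.eq_or_lt with rfl | hlt
  · have hempty : Icc (j + 1) j = ∅ := Icc_eq_empty_of_lt j.lt_succ_self
    simp only [chainOccupation, dividedExpConv, hempty, sum_empty, Ioc_self, prod_empty, if_true]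
    module
  · have hprod : ∏ k ∈ Ioc j m, b k = b (j + 1) * ∏ k ∈ Ioc (j + 1) m, b k := by
      rw [mul_prod_Ioc_eq_prod_Icc (Nat.add_one_le_iff.2 hlt), Icc_add_one_left_eq_Ioc]
    have hne : Icc (j + 1) m ≠ ∅ := (nonempty_Icc.2 hlt).ne_empty
    simp only [chainOccupation, hprod, if_neg hlt.ne', if_neg hne]
    module

lemma hasDerivAt_loopOccupation [CompleteSpace E] {u : ℝ → E} (hu : Continuous u) {j : ℕ}
    (hjN : j ≤ N) (hb : Set.InjOn b (Icc j N)) (t : ℝ) :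
    HasDerivAt (loopOccupation N a b u j)
      (a j • u t - b j • loopOccupation N a b u j t +
        b (j + 1) • loopOccupation N a b u (j + 1) t) t := by
  have hderiv : HasDerivAt (loopOccupation N a b u j) (∑ m ∈ Icc j N, a m •
      ((if m = j then u t else 0) - b j • chainOccupation b u m j t +
        b (j + 1) • chainOccupation b u m (j + 1) t)) t := by
    refine HasDerivAt.fun_sum fun m hm => HasDerivAt.const_smul (a m) ?_
    obtain ⟨hjm, hmN⟩ := mem_Icc.1 hm
    exact hasDerivAt_chainOccupation hu hjm
      (hb.mono (coe_subset.2 (Icc_subset_Icc_right hmN))) t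
  have hinput : a j • u t = ∑ m ∈ Icc j N, a m • (if m = j then u t else 0) := by
    simp [hjN]
  have hnext : loopOccupation N a b u (j + 1) t =
      ∑ m ∈ Icc j N, a m • chainOccupation b u m (j + 1) t := by
    rw [← insert_Icc_add_one_left_eq_Icc hjN, sum_insert (by simp),
      chainOccupation_of_lt u j.lt_succ_self, smul_zero, zero_add, loopOccupation]
  refine hderiv.congr_deriv ?_
  rw [hinput, hnext, loopOccupation, smul_sum, smul_sum, ← sum_sub_distrib, ← sum_add_distrib]
  exact sum_congr rfl fun m _ => by module

lemma memoryKernel_eq_sum_nodalWeight (N : ℕ) (a b : ℕ → ℝ) (t : ℝ) :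
    memoryKernel N a b t = ∑ m ∈ Icc 1 N, ∑ i ∈ Icc 1 m, (a m * (∏ k ∈ Icc 1 m, b k) *
      Lagrange.nodalWeight (Icc 1 m) (fun k => -b k) i) * Real.exp (-b i * t) := by
  refine sum_congr rfl fun m _ => ?_
  rw [mul_sum]
  refine sum_congr rfl fun i hi => ?_
  rw [mul_prod_erase_div_sub hi]
  ring

lemma integral_memoryKernel_smul {u : ℝ → E} (hu : Continuous u) (t : ℝ) :
    ∫ s in (0 : ℝ)..t, memoryKernel N a b (t - s) • u s = b 1 • loopOccupation N a b u 1 t := by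
  simp only [memoryKernel_eq_sum_nodalWeight, sum_smul, mul_smul _ (Real.exp _)]
  rw [intervalIntegral.integral_finsetSum
    fun m _ => Continuous.intervalIntegrable (by fun_prop) _ _, loopOccupation, smul_sum]
  refine sum_congr rfl fun m hm => ?_
  rw [intervalIntegral.integral_finsetSum
    fun i _ => Continuous.intervalIntegrable (by fun_prop) _ _, chainOccupation,
    ← mul_prod_Ioc_eq_prod_Icc (mem_Icc.1 hm).1, dividedExpConv]
  simp only [intervalIntegral.integral_smul, smul_sum, expConv]
  exact sum_congr rfl fun i _ => by module

end Loop

theorem stmt_7_general {E : Type*} [NormedAddCommGroup E] [NormedSpace ℝ E] [CompleteSpace E]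
    (N : ℕ) (a b : ℕ → ℝ) (hb : Set.InjOn b (Icc 1 N)) (u : ℝ → E)
    (hu : ∀ t : ℝ, 0 ≤ t → HasDerivAt u
      (-(∑ k ∈ Icc 1 N, a k) • u t + ∫ s in (0 : ℝ)..t, memoryKernel N a b (t - s) • u s) t) :
    ∃ p : ℝ → Fin (N + 1) → E,
      (∀ t : ℝ, 0 ≤ t → HasDerivAt p (fun i => ∑ k, loopGenerator N a b i k • p t k) t) ∧
      p 0 = (fun i : Fin (N + 1) => if (i : ℕ) = 0 then u 0 else 0) ∧
      ∀ t : ℝ, 0 ≤ t → p t 0 = u t := by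
  -- Nothing is known about `u` on the negative half-line, so it is replaced there by `u 0`.
  let U : ℝ → E := fun t => u (max t 0)
  have hUu : ∀ t, 0 ≤ t → U t = u t := fun t ht => congrArg u (max_eq_left ht)
  have hU : Continuous U :=
    ContinuousOn.comp_continuous (s := Set.Ici 0)
      (fun t ht => (hu t ht).continuousAt.continuousWithinAt) (by fun_prop) fun t =>
      le_max_right t 0
  have hmemory : ∀ t, 0 ≤ t → ∫ s in (0 : ℝ)..t, memoryKernel N a b (t - s) • u s =
      b 1 • loopOccupation N a b U 1 t := by
    intro t ht
    rw [← integral_memoryKernel_smul hU]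
    refine intervalIntegral.integral_congr fun s hs => ?_
    rw [Set.uIcc_of_le ht] at hs
    simp only [hUu s hs.1]
  let x : ℝ → ℕ → E := fun t j => if j = 0 then u t else loopOccupation N a b U j t
  have hx : ∀ t, x t (N + 1) = 0 := fun t => loopOccupation_of_lt U N.lt_succ_self t
  refine ⟨fun t i => x t i, fun t ht => hasDerivAt_pi.2 fun i => ?_, ?_, fun t _ => rfl⟩
  · rcases eq_or_ne i 0 with rfl | hi
    · rw [sum_loopGenerator_zero_smul (hx t)]
      exact hmemory t ht ▸ hu t ht
    · rw [sum_loopGenerator_smul_of_ne_zero (hx t) hi]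
      have hi' : (i : ℕ) ≠ 0 := Fin.val_ne_zero_iff.2 hi
      have hbi : Set.InjOn b (Icc (i : ℕ) N) :=
        hb.mono (coe_subset.2 (Icc_subset_Icc_left (Nat.one_le_iff_ne_zero.2 hi')))
      simpa only [x, if_neg hi', if_true, Nat.succ_ne_zero, if_false, hUu t ht] using
        hasDerivAt_loopOccupation hU (Nat.le_of_lt_succ i.2) hbi t
  · funext i
    simp only [x, loopOccupation_zero_right]

/-- **From Memory to Markov.**  The solution of the memory equation with kernel
`K(t) = ∑ⱼ aⱼ Kⱼ(t)` is the first component of a Markov process generated by the loop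
Markov generator `A*`. -/
theorem stmt_7 (N : ℕ) (hN : 1 ≤ N) (a b : ℕ → ℝ) (u₀ : ℝ)
    (ha : ∀ j ∈ Finset.Icc 1 N, 0 ≤ a j)
    (hb : ∀ j ∈ Finset.Icc 1 N, 0 < b j)
    (hbd : ∀ i ∈ Finset.Icc 1 N, ∀ j ∈ Finset.Icc 1 N, i ≠ j → b i ≠ b j)
    (Astar : Matrix (Fin (N + 1)) (Fin (N + 1)) ℝ)
    (hA : Astar = Matrix.of fun i j : Fin (N + 1) =>
      if (i : ℕ) = 0 ∧ (j : ℕ) = 0 then -(∑ k ∈ Finset.Icc 1 N, a k)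
      else if (i : ℕ) = 0 ∧ (j : ℕ) = 1 then b 1
      else if (j : ℕ) = 0 then a (i : ℕ)
      else if (i : ℕ) = (j : ℕ) then -(b (i : ℕ))
      else if (j : ℕ) = (i : ℕ) + 1 then b (j : ℕ)
      else 0)
    (K : ℝ → ℝ)
    (hK : K = fun t => ∑ j ∈ Finset.Icc 1 N, a j *
      ∑ i ∈ Finset.Icc 1 j, b i * (∏ k ∈ (Finset.Icc 1 j).erase i, b k / (b k - b i)) *
        Real.exp (-(b i) * t))
    (u : ℝ → ℝ)
    (hu : ∀ t : ℝ, 0 ≤ t →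
      HasDerivAt u (-(∑ k ∈ Finset.Icc 1 N, a k) * u t + ∫ s in (0:ℝ)..t, K (t - s) * u s) t)
    (hu0 : u 0 = u₀) :
    ∃ p : ℝ → Fin (N + 1) → ℝ,
      (∀ t : ℝ, 0 ≤ t → HasDerivAt p (Astar.mulVec (p t)) t) ∧
      p 0 = (fun i : Fin (N + 1) => if (i : ℕ) = 0 then u₀ else 0) ∧
      ∀ t : ℝ, 0 ≤ t → p t 0 = u t := by
  subst hA hK hu0
  exact stmt_7_general N a b (fun i hi j hj => not_imp_not.1 (hbd i hi j hj)) u hu
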